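/- The mean curvature H of the Killing graph of u with respect to N = (1/W)(γY − ϑ_*∇u) satisfies the divergence-form identity nH = div(∇u/W) − (1/(2γW))⟨∇γ, ∇u⟩ = div(∇u/W) − (γ/W)⟨∇̄_Y Y, ∇u⟩, where div and ⟨·,·⟩ are taken in the leaf P; equivalently, in nondivergence form, nH = (σ^{ij} − u^i u^j/W²) u_{i;j}/W − ((2γ + |∇u|²)/W³) ⟨∇γ/(2γ), ∇u⟩. -/

import Mathlib

/-!
Formalization of the setting of "Mean curvature flow of Killing graphs"
(Lira–Wanderley).  The integral leaf `P` of the distribution orthogonal to the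
Killing field `Y` is presented in coordinates as `ℝⁿ` (points `Fin n → ℝ`)
carrying a Riemannian metric `σ`; the ambient manifold is the warped product
`M = P ×_{1/√γ} ℝ` with coordinates `(x⁰ = s, x)` and metric
`ḡ = σ + (1/γ) ds²`, where `γ = 1/|Y|²` and `Y = ∂/∂x⁰`.  All geometric
quantities (Christoffel symbols, second fundamental form and mean curvature of
a Killing graph, ambient Ricci curvature, …) are defined concretely from this
data.
-/

noncomputable section

open Real MeasureTheory Filter Topology

namespace KMCF

variable {n : ℕ}

/-- Partial derivative of a function on the coordinate chart of the leaf `P`. -/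
def pd (f : (Fin n → ℝ) → ℝ) (i : Fin n) (x : Fin n → ℝ) : ℝ :=
  fderiv ℝ f x (Pi.single i 1)

/-- Component of an ambient tangent vector `(v⁰, vⁱ)` of `M = P ×_{1/√γ} ℝ`. -/
def vComp (v : ℝ × (Fin n → ℝ)) (a : Fin (n + 1)) : ℝ :=
  if ha : a = 0 then v.1 else v.2 (a.pred ha)

/-- Ambient partial derivative (nothing depends on the flow parameter `x⁰`). -/
def ambPd (f : (Fin n → ℝ) → ℝ) (a : Fin (n + 1)) (x : Fin n → ℝ) : ℝ :=
  if ha : a = 0 then 0 else pd f (a.pred ha) x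

/-- Coordinate tangent vectors `X_* ∂_i = ∂_i + u_i ∂_0` of the Killing graph
`X(x) = ϑ(u(x), x)`. -/
def tangentV (u : (Fin n → ℝ) → ℝ) (i : Fin n) (x : Fin n → ℝ) : ℝ × (Fin n → ℝ) :=
  (pd u i x, Pi.single i 1)

/-- Coordinate data of the integral leaf `P`: the metric `σ`, its inverse, and
the warping function `γ = 1/|Y|²` of the Killing field `Y`. -/
structure LeafData (n : ℕ) where
  σ : (Fin n → ℝ) → Fin n → Fin n → ℝ
  σInv : (Fin n → ℝ) → Fin n → Fin n → ℝ
  γ : (Fin n → ℝ) → ℝ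
  σ_symm : ∀ x i j, σ x i j = σ x j i
  σ_posdef : ∀ x (v : Fin n → ℝ), v ≠ 0 → 0 < ∑ i, ∑ j, σ x i j * v i * v j
  σInv_mul_σ : ∀ x i j, (∑ k, σInv x i k * σ x k j) = if i = j then (1 : ℝ) else 0
  σ_smooth : ∀ i j, ContDiff ℝ (⊤ : ℕ∞) fun x => σ x i j
  γ_pos : ∀ x, 0 < γ x
  γ_smooth : ContDiff ℝ (⊤ : ℕ∞) γ

namespace LeafData

variable (D : LeafData n)

/-- Christoffel symbols `Γ^k_{ij}` of the leaf metric `σ`. -/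
def Γc (x : Fin n → ℝ) (i j k : Fin n) : ℝ :=
  (1 / 2) * ∑ l, D.σInv x k l *
    (pd (fun y => D.σ y j l) i x + pd (fun y => D.σ y i l) j x -
      pd (fun y => D.σ y i j) l x)

/-- Covariant Hessian `f_{i;j}` in `P`. -/
def hess (f : (Fin n → ℝ) → ℝ) (i j : Fin n) (x : Fin n → ℝ) : ℝ :=
  pd (pd f j) i x - ∑ k, D.Γc x i j k * pd f k x

/-- Raised gradient components `f^i = σ^{ij} f_j`. -/
def gradUp (f : (Fin n → ℝ) → ℝ) (i : Fin n) (x : Fin n → ℝ) : ℝ :=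
  ∑ j, D.σInv x i j * pd f j x

/-- Inner product `⟨∇f, ∇g⟩` of gradients in `P`. -/
def inner2 (f g : (Fin n → ℝ) → ℝ) (x : Fin n → ℝ) : ℝ :=
  ∑ i, ∑ j, D.σInv x i j * pd f i x * pd g j x

/-- `|∇u|²`. -/
def gradSq (u : (Fin n → ℝ) → ℝ) (x : Fin n → ℝ) : ℝ := D.inner2 u u x

/-- `W = √(γ + |∇u|²)`. -/
def Wf (u : (Fin n → ℝ) → ℝ) (x : Fin n → ℝ) : ℝ :=
  Real.sqrt (D.γ x + D.gradSq u x)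

/-- Divergence in `P` of a vector field with raised components `Z^i`. -/
def divP (Z : Fin n → (Fin n → ℝ) → ℝ) (x : Fin n → ℝ) : ℝ :=
  ∑ i, (pd (Z i) i x + ∑ k, D.Γc x i k i * Z k x)

/-- Divergence in the ambient warped product `M = P ×_{1/√γ} ℝ` of an
`s`-independent horizontal vector field (`Γ̄⁰_{0i} = −γ_i/(2γ)`). -/
def divM (Z : Fin n → (Fin n → ℝ) → ℝ) (x : Fin n → ℝ) : ℝ :=
  D.divP Z x - ∑ i, (pd D.γ i x / (2 * D.γ x)) * Z i x

/-- The ambient warped-product metric `ḡ` of `M` in the coordinates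
`(x⁰ = s, x)`:  `ḡ₀₀ = 1/γ`, `ḡ₀ᵢ = 0`, `ḡᵢⱼ = σᵢⱼ`. -/
def ambG (x : Fin n → ℝ) (a b : Fin (n + 1)) : ℝ :=
  if ha : a = 0 then (if b = 0 then 1 / D.γ x else 0)
  else if hb : b = 0 then 0 else D.σ x (a.pred ha) (b.pred hb)

/-- The inverse ambient metric. -/
def ambGInv (x : Fin n → ℝ) (a b : Fin (n + 1)) : ℝ :=
  if ha : a = 0 then (if b = 0 then D.γ x else 0)
  else if hb : b = 0 then 0 else D.σInv x (a.pred ha) (b.pred hb)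

/-- Ambient Christoffel symbols `Γ̄^a_{bc}` of the warped-product metric. -/
def ambΓ (x : Fin n → ℝ) (a b c : Fin (n + 1)) : ℝ :=
  (1 / 2) * ∑ e, D.ambGInv x a e *
    (ambPd (fun y => D.ambG y b e) c x + ambPd (fun y => D.ambG y c e) b x -
      ambPd (fun y => D.ambG y b c) e x)

/-- Ambient curvature tensor `R̄^a_{bcd}`. -/
def ambRiem (x : Fin n → ℝ) (a b c d : Fin (n + 1)) : ℝ :=
  ambPd (fun y => D.ambΓ y a d b) c x - ambPd (fun y => D.ambΓ y a c b) d x +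
    (∑ e, D.ambΓ x a c e * D.ambΓ x e d b) -
    ∑ e, D.ambΓ x a d e * D.ambΓ x e c b

/-- Ambient Ricci curvature as a bilinear form on tangent vectors of `M`. -/
def Ric (x : Fin n → ℝ) (v w : ℝ × (Fin n → ℝ)) : ℝ :=
  ∑ b, ∑ c, (∑ a, D.ambRiem x a b a c) * vComp v b * vComp w c

/-- The ambient Riemannian inner product `⟨·,·⟩` at `x`. -/
def ambInner (x : Fin n → ℝ) (v w : ℝ × (Fin n → ℝ)) : ℝ :=
  ∑ a, ∑ b, D.ambG x a b * vComp v a * vComp w b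

/-- Ambient covariant derivative `∇̄_v Z` of an `s`-independent vector field
`Z` in the direction of the tangent vector `v` at `x`. -/
def ambCov (Z : (Fin n → ℝ) → ℝ × (Fin n → ℝ)) (v : ℝ × (Fin n → ℝ))
    (x : Fin n → ℝ) : ℝ × (Fin n → ℝ) :=
  ((∑ i, v.2 i * pd (fun y => (Z y).1) i x) +
      ∑ b, ∑ c, D.ambΓ x 0 b c * vComp v b * vComp (Z x) c,
    fun k =>
      (∑ i, v.2 i * pd (fun y => (Z y).2 k) i x) +
        ∑ b, ∑ c, D.ambΓ x k.succ b c * vComp v b * vComp (Z x) c)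

/-- The unit normal `N = (1/W)(γ Y − ϑ_* ∇u)` of the Killing graph. -/
def normalN (u : (Fin n → ℝ) → ℝ) (x : Fin n → ℝ) : ℝ × (Fin n → ℝ) :=
  (D.γ x / D.Wf u x, fun k => -D.gradUp u k x / D.Wf u x)

/-- Second fundamental form `a_{ij} = ⟨∇̄_{X_*∂_i} X_*∂_j, N⟩` of the graph. -/
def sff (u : (Fin n → ℝ) → ℝ) (i j : Fin n) (x : Fin n → ℝ) : ℝ :=
  D.ambInner x (D.ambCov (fun y => tangentV u j y) (tangentV u i x) x)
    (D.normalN u x)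

/-- Induced metric `g_{ij} = σ_{ij} + u_i u_j / γ` of the graph. -/
def gmet (u : (Fin n → ℝ) → ℝ) (x : Fin n → ℝ) (i j : Fin n) : ℝ :=
  D.σ x i j + pd u i x * pd u j x / D.γ x

/-- Inverse induced metric `g^{ij} = σ^{ij} − u^i u^j / W²`. -/
def gInv (u : (Fin n → ℝ) → ℝ) (x : Fin n → ℝ) (i j : Fin n) : ℝ :=
  D.σInv x i j - D.gradUp u i x * D.gradUp u j x / (D.Wf u x) ^ 2

/-- `n` times the mean curvature of the graph: `nH = g^{ij} a_{ij}`. -/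
def nH (u : (Fin n → ℝ) → ℝ) (x : Fin n → ℝ) : ℝ :=
  ∑ i, ∑ j, D.gInv u x i j * D.sff u i j x

/-- Christoffel symbols of the induced metric of the graph. -/
def Γg (u : (Fin n → ℝ) → ℝ) (x : Fin n → ℝ) (i j k : Fin n) : ℝ :=
  (1 / 2) * ∑ l, D.gInv u x k l *
    (pd (fun y => D.gmet u y j l) i x + pd (fun y => D.gmet u y i l) j x -
      pd (fun y => D.gmet u y i j) l x)

/-- Covariant derivative `∇_k T_{ij}` in `P` of a 2-tensor. -/
def covP2 (T : Fin n → Fin n → (Fin n → ℝ) → ℝ) (k i j : Fin n)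
    (x : Fin n → ℝ) : ℝ :=
  pd (T i j) k x - ∑ l, D.Γc x k i l * T l j x - ∑ l, D.Γc x k j l * T i l x

/-- Covariant derivative `∇^Σ_k T_{ij}` on the graph of a 2-tensor. -/
def covG2 (u : (Fin n → ℝ) → ℝ) (T : Fin n → Fin n → (Fin n → ℝ) → ℝ)
    (k i j : Fin n) (x : Fin n → ℝ) : ℝ :=
  pd (T i j) k x - ∑ l, D.Γg u x k i l * T l j x - ∑ l, D.Γg u x k j l * T i l x

/-- Components of the gradient on `Σ` of a function of `x`. -/
def gradG (u f : (Fin n → ℝ) → ℝ) (j : Fin n) (x : Fin n → ℝ) : ℝ :=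
  ∑ k, D.gInv u x j k * pd f k x

/-- Components, in the basis `X_*∂_i`, of the tangential projection `Y^T`
of the Killing field:  `Y^T = (u^i/W²) X_*∂_i`. -/
def YTc (u : (Fin n → ℝ) → ℝ) (i : Fin n) (x : Fin n → ℝ) : ℝ :=
  D.gradUp u i x / (D.Wf u x) ^ 2

/-- Squared norm `|A|²` of the second fundamental form. -/
def Anorm2 (u : (Fin n → ℝ) → ℝ) (x : Fin n → ℝ) : ℝ :=
  ∑ i, ∑ j, ∑ k, ∑ l,
    D.gInv u x i k * D.gInv u x j l * D.sff u i j x * D.sff u k l x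

/-- Mixed components `a_i^j = g^{jk} a_{ik}` of the Weingarten map. -/
def aMix (u : (Fin n → ℝ) → ℝ) (i j : Fin n) (x : Fin n → ℝ) : ℝ :=
  ∑ k, D.gInv u x j k * D.sff u i k x

/-- Raised spatial components `N^j = −u^j/W` of the unit normal. -/
def NupS (u : (Fin n → ℝ) → ℝ) (j : Fin n) (x : Fin n → ℝ) : ℝ :=
  -D.gradUp u j x / D.Wf u x

/-- The support-type function `θ = ⟨∇d, N⟩`. -/
def theta (u d : (Fin n → ℝ) → ℝ) (x : Fin n → ℝ) : ℝ :=
  D.ambInner x ((0 : ℝ), fun k => D.gradUp d k x) (D.normalN u x)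

/-- `κ = ⟨γ ∇̄_Y Y, ∇d⟩ = ⟨∇γ, ∇d⟩/(2γ)`. -/
def kappa (d : (Fin n → ℝ) → ℝ) (x : Fin n → ℝ) : ℝ :=
  D.inner2 D.γ d x / (2 * D.γ x)

/-- The Korevaar auxiliary function `h = 1 + α d − ϕ ⟨∇d, N⟩`. -/
def hKor (u d ϕ : (Fin n → ℝ) → ℝ) (α : ℝ) (x : Fin n → ℝ) : ℝ :=
  1 + α * d x - ϕ x * D.theta u d x

/-- `η = e^{Ku} h`. -/
def etaKor (u d ϕ : (Fin n → ℝ) → ℝ) (K α : ℝ) (x : Fin n → ℝ) : ℝ :=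
  Real.exp (K * u x) * D.hKor u d ϕ α x

/-- Riemannian integral over `Ω ⊆ P` (density `√(det σ)`). -/
def intP (Ω : Set (Fin n → ℝ)) (f : (Fin n → ℝ) → ℝ) : ℝ :=
  ∫ x in Ω, f x * Real.sqrt (Matrix.det (Matrix.of fun i j => D.σ x i j))

/-- The nonparametric mean curvature flow equation (23):
`u_t = (σ^{ij} − u^i u^j/W²) u_{i;j} − (1/(2γ) + 1/(2W²)) γ^i u_i − W𝓗`. -/
def SolvesFlowOn (Ω : Set (Fin n → ℝ)) (J : Set ℝ) (𝓗 : (Fin n → ℝ) → ℝ)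
    (u : (Fin n → ℝ) → ℝ → ℝ) : Prop :=
  ∀ x ∈ Ω, ∀ t ∈ J,
    deriv (u x) t =
      (∑ i, ∑ j, D.gInv (fun y => u y t) x i j * D.hess (fun y => u y t) i j x) -
        (1 / (2 * D.γ x) + 1 / (2 * (D.Wf (fun y => u y t) x) ^ 2)) *
          D.inner2 D.γ (fun y => u y t) x -
        D.Wf (fun y => u y t) x * 𝓗 x

/-- The divergence form (21) of the flow equation:
`u_t = W div(∇u/W) − W𝓗 − γ⟨∇̄_Y Y, ∇u⟩`. -/
def SolvesFlowDivOn (Ω : Set (Fin n → ℝ)) (J : Set ℝ) (𝓗 : (Fin n → ℝ) → ℝ)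
    (u : (Fin n → ℝ) → ℝ → ℝ) : Prop :=
  ∀ x ∈ Ω, ∀ t ∈ J,
    deriv (u x) t =
      D.Wf (fun y => u y t) x *
          D.divP (fun i y => D.gradUp (fun z => u z t) i y /
            D.Wf (fun z => u z t) y) x -
        D.Wf (fun y => u y t) x * 𝓗 x -
        D.γ x * (D.inner2 D.γ (fun y => u y t) x / (2 * (D.γ x) ^ 2))

/-- The Neumann condition `⟨N, ν⟩ = ϕ` on `∂Ω`. -/
def NeumannOn (Ω : Set (Fin n → ℝ)) (J : Set ℝ) (ν : (Fin n → ℝ) → Fin n → ℝ)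
    (ϕ : (Fin n → ℝ) → ℝ) (u : (Fin n → ℝ) → ℝ → ℝ) : Prop :=
  ∀ x ∈ frontier Ω, ∀ t ∈ J,
    D.ambInner x (D.normalN (fun y => u y t) x) ((0 : ℝ), ν x) = ϕ x

/-- The stationary prescribed mean curvature equation (5) with the prescribed
contact angle condition (6). -/
def SolvesStationary (Ω : Set (Fin n → ℝ)) (ν : (Fin n → ℝ) → Fin n → ℝ)
    (𝓗 ϕ : (Fin n → ℝ) → ℝ) (v : (Fin n → ℝ) → ℝ) : Prop :=
  (∀ x ∈ Ω,
      D.divP (fun i y => D.gradUp v i y / D.Wf v y) x -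
          D.γ x * (D.inner2 D.γ v x / (2 * (D.γ x) ^ 2 * D.Wf v x)) = 𝓗 x) ∧
    ∀ x ∈ frontier Ω, D.ambInner x (D.normalN v x) ((0 : ℝ), ν x) = ϕ x

/-- The translating-soliton equation (41) with Neumann condition (42). -/
def SolvesSoliton (Ω : Set (Fin n → ℝ)) (ν : (Fin n → ℝ) → Fin n → ℝ)
    (𝓗 ϕ : (Fin n → ℝ) → ℝ) (C : ℝ) (v : (Fin n → ℝ) → ℝ) : Prop :=
  (∀ x ∈ Ω,
      D.divP (fun i y => D.gradUp v i y / D.Wf v y) x -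
          D.γ x * (D.inner2 D.γ v x / (2 * (D.γ x) ^ 2 * D.Wf v x)) =
        𝓗 x + C / D.Wf v x) ∧
    ∀ x ∈ frontier Ω, D.ambInner x (D.normalN v x) ((0 : ℝ), ν x) = ϕ x

end LeafData

end KMCF

namespace KMCF

open LeafData

/-!
In matrix form, compatibility of the Levi-Civita connection with the leaf metric reads
`∂ₘσ = Γₘᵀσ + σΓₘ`, hence `∂ₘσ⁻¹ = -(σ⁻¹Γₘᵀ + Γₘσ⁻¹)` and `∂ₘ∇u = σ⁻¹(Hess u)ₘ - Γₘ∇u`.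
Therefore `div ∇u = σⁱʲ u_{i;j}` and `2W dW = dγ + 2 Hess u(∇u)`, which together expand
`div(∇u/W)`.

On the other side, the Christoffel symbols of the warped product give
`W aᵢⱼ = u_{i;j} - (γᵢuⱼ + uᵢγⱼ)/(2γ) - ⟨∇γ, ∇u⟩ uᵢuⱼ/(2γ²)`. Since `gⁱʲuⱼ = (γ/W²) uⁱ`, tracing
with `gⁱʲ` yields the nondivergence form, and substituting the expansion of `div(∇u/W)` yields the
divergence form.
-/

section PartialDerivatives

open scoped Matrix

/-- The differential `df` of `f`, as the covector `(∂₁f, …, ∂ₙf)`. -/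
def differential {n : ℕ} (f : (Fin n → ℝ) → ℝ) (x : Fin n → ℝ) : Fin n → ℝ :=
  fun i => pd f i x

/-- The partial derivative `∂ₘv` of a vector-valued function, taken entry by entry. -/
def pdVec {n : ℕ} {ι : Type*} (v : (Fin n → ℝ) → ι → ℝ) (m : Fin n) (x : Fin n → ℝ) : ι → ℝ :=
  fun i => pd (fun y => v y i) m x

/-- The partial derivative `∂ₘA` of a matrix-valued function, taken entry by entry (`Matrix` has
no canonical norm). -/
def pdMatrix {n : ℕ} {ι κ : Type*} (A : (Fin n → ℝ) → Matrix ι κ ℝ) (m : Fin n)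
    (x : Fin n → ℝ) : Matrix ι κ ℝ :=
  Matrix.of fun i j => pd (fun y => A y i j) m x

variable {n : ℕ} {f g : (Fin n → ℝ) → ℝ} {x : Fin n → ℝ} (m : Fin n)

theorem pd_const (c : ℝ) : pd (fun _ => c) m x = 0 := by
  simp [pd]

theorem pd_congr (h : f =ᶠ[𝓝 x] g) : pd f m x = pd g m x := by
  rw [pd, h.fderiv_eq, pd]

theorem pd_add (hf : DifferentiableAt ℝ f x) (hg : DifferentiableAt ℝ g x) :
    pd (fun y => f y + g y) m x = pd f m x + pd g m x := by
  simp [pd, fderiv_fun_add hf hg]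

theorem pd_mul (hf : DifferentiableAt ℝ f x) (hg : DifferentiableAt ℝ g x) :
    pd (fun y => f y * g y) m x = pd f m x * g x + f x * pd g m x := by
  simp [pd, fderiv_fun_mul hf hg, add_comm, mul_comm]

theorem pd_sum {ι : Type*} {s : Finset ι} {F : ι → (Fin n → ℝ) → ℝ}
    (hF : ∀ k ∈ s, DifferentiableAt ℝ (F k) x) :
    pd (fun y => ∑ k ∈ s, F k y) m x = ∑ k ∈ s, pd (F k) m x := by
  simp [pd, fderiv_fun_sum hF]

theorem pd_inv (hf : DifferentiableAt ℝ f x) (hfx : f x ≠ 0) :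
    pd (fun y => (f y)⁻¹) m x = -pd f m x / f x ^ 2 := by
  have h := ((hasDerivAt_inv hfx).comp_hasFDerivAt x hf.hasFDerivAt).fderiv
  rw [pd, show (fun y => (f y)⁻¹) = (fun t => t⁻¹) ∘ f from rfl, h]
  simp [pd, div_eq_inv_mul]

theorem pd_div (hf : DifferentiableAt ℝ f x) (hg : DifferentiableAt ℝ g x) (hgx : g x ≠ 0) :
    pd (fun y => f y / g y) m x = pd f m x / g x - f x * pd g m x / g x ^ 2 := by
  simp only [div_eq_mul_inv]
  rw [pd_mul m hf (hg.fun_inv hgx), pd_inv m hg hgx]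
  ring

theorem pd_sqrt (hf : DifferentiableAt ℝ f x) (hfx : f x ≠ 0) :
    pd (fun y => √(f y)) m x = pd f m x / (2 * √(f x)) := by
  simp [pd, fderiv_sqrt hf hfx, div_eq_inv_mul]

theorem differentiableAt_differential (hf : ContDiffAt ℝ 2 f x) :
    DifferentiableAt ℝ (differential f) x := by
  have hf' : DifferentiableAt ℝ (fderiv ℝ f) x :=
    (hf.fderiv_right (m := 1) (by norm_num)).differentiableAt (by norm_num)
  exact differentiableAt_pi.2 fun i => hf'.clm_apply (differentiableAt_const _)

variable {ι κ μ : Type*} [Fintype ι]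

theorem differentiableAt_dotProduct {v w : (Fin n → ℝ) → ι → ℝ}
    (hv : DifferentiableAt ℝ v x) (hw : DifferentiableAt ℝ w x) :
    DifferentiableAt ℝ (fun y => v y ⬝ᵥ w y) x :=
  .fun_sum fun i _ => (differentiableAt_pi.1 hv i).fun_mul (differentiableAt_pi.1 hw i)

theorem pd_dotProduct {v w : (Fin n → ℝ) → ι → ℝ}
    (hv : DifferentiableAt ℝ v x) (hw : DifferentiableAt ℝ w x) :
    pd (fun y => v y ⬝ᵥ w y) m x = pdVec v m x ⬝ᵥ w x + v x ⬝ᵥ pdVec w m x := by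
  have hv := differentiableAt_pi.1 hv
  have hw := differentiableAt_pi.1 hw
  simp only [dotProduct]
  rw [pd_sum m fun i _ => (hv i).fun_mul (hw i), ← Finset.sum_add_distrib]
  exact Finset.sum_congr rfl fun i _ => pd_mul m (hv i) (hw i)

theorem pdVec_mulVec {A : (Fin n → ℝ) → Matrix μ ι ℝ} {v : (Fin n → ℝ) → ι → ℝ}
    (hA : ∀ i j, DifferentiableAt ℝ (fun y => A y i j) x) (hv : DifferentiableAt ℝ v x) :
    pdVec (fun y => A y *ᵥ v y) m x = pdMatrix A m x *ᵥ v x + A x *ᵥ pdVec v m x :=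
  funext fun i => pd_dotProduct m (differentiableAt_pi.2 (hA i)) hv

theorem pdMatrix_mul {A : (Fin n → ℝ) → Matrix μ ι ℝ} {B : (Fin n → ℝ) → Matrix ι κ ℝ}
    (hA : ∀ i j, DifferentiableAt ℝ (fun y => A y i j) x)
    (hB : ∀ i j, DifferentiableAt ℝ (fun y => B y i j) x) :
    pdMatrix (fun y => A y * B y) m x = pdMatrix A m x * B x + A x * pdMatrix B m x := by
  ext i j
  exact pd_dotProduct m (differentiableAt_pi.2 (hA i)) (differentiableAt_pi.2 fun k => hB k j)

variable [DecidableEq ι] {A : (Fin n → ℝ) → Matrix ι ι ℝ}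

theorem differentiableAt_det (hA : ∀ i j, DifferentiableAt ℝ (fun y => A y i j) x) :
    DifferentiableAt ℝ (fun y => (A y).det) x := by
  simp only [Matrix.det_apply]
  fun_prop

theorem differentiableAt_inv_apply (hA : ∀ i j, DifferentiableAt ℝ (fun y => A y i j) x)
    (hdet : (A x).det ≠ 0) (i j : ι) : DifferentiableAt ℝ (fun y => (A y)⁻¹ i j) x := by
  simp only [Matrix.inv_def, Ring.inverse_eq_inv', Matrix.smul_apply, Matrix.adjugate_apply,
    smul_eq_mul]
  refine ((differentiableAt_det hA).fun_inv hdet).fun_mul (differentiableAt_det fun k l => ?_)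
  rcases eq_or_ne k j with rfl | hkj
  · simp
  · simpa only [Matrix.updateRow_ne hkj] using hA k l

theorem pdMatrix_inv (hA : ∀ i j, DifferentiableAt ℝ (fun y => A y i j) x)
    (hdet : (A x).det ≠ 0) :
    pdMatrix (fun y => (A y)⁻¹) m x = -((A x)⁻¹ * pdMatrix A m x * (A x)⁻¹) := by
  have hunit : IsUnit (A x).det := hdet.isUnit
  have hinv_mul : ∀ᶠ y in 𝓝 x, (A y)⁻¹ * A y = 1 := by
    filter_upwards [(differentiableAt_det hA).continuousAt.eventually_ne hdet] with y hy
    exact Matrix.nonsing_inv_mul _ hy.isUnit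
  have hpd : pdMatrix (fun y => (A y)⁻¹ * A y) m x = 0 := by
    ext i j
    exact (pd_congr m (hinv_mul.mono fun y hy => congrFun₂ hy i j)).trans (pd_const m _)
  rw [pdMatrix_mul m (differentiableAt_inv_apply hA hdet) hA] at hpd
  calc pdMatrix (fun y => (A y)⁻¹) m x
      = pdMatrix (fun y => (A y)⁻¹) m x * A x * (A x)⁻¹ := by
        rw [Matrix.mul_nonsing_inv_cancel_right _ _ hunit]
    _ = -((A x)⁻¹ * pdMatrix A m x * (A x)⁻¹) := by
        rw [eq_neg_of_add_eq_zero_left hpd, neg_mul]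

end PartialDerivatives

namespace LeafData

open scoped Matrix

variable {n : ℕ} (D : LeafData n)

section LeafMetric

/-- The matrix `(σᵢⱼ)` of the leaf metric. -/
def metric (x : Fin n → ℝ) : Matrix (Fin n) (Fin n) ℝ := Matrix.of (D.σ x)

/-- The matrix `(σⁱʲ)` of the inverse leaf metric. -/
def metricInv (x : Fin n → ℝ) : Matrix (Fin n) (Fin n) ℝ := Matrix.of (D.σInv x)

/-- The connection matrix `Γₘ` of the leaf in the direction `∂ₘ`: its entry in row `k` and
column `j` is `Γᵏₘⱼ`. -/
def connectionMatrix (m : Fin n) (x : Fin n → ℝ) : Matrix (Fin n) (Fin n) ℝ :=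
  Matrix.of fun k j => D.Γc x m j k

variable (x : Fin n → ℝ)

theorem metricInv_mul_metric : D.metricInv x * D.metric x = 1 := by
  ext i j
  exact (D.σInv_mul_σ x i j).trans (Matrix.one_apply).symm

theorem metric_mul_metricInv : D.metric x * D.metricInv x = 1 :=
  mul_eq_one_comm.1 (D.metricInv_mul_metric x)

theorem metricInv_eq_inv : D.metricInv x = (D.metric x)⁻¹ :=
  (Matrix.inv_eq_left_inv (D.metricInv_mul_metric x)).symm

theorem det_metric_ne_zero : (D.metric x).det ≠ 0 :=
  Matrix.det_ne_zero_of_left_inverse (D.metricInv_mul_metric x)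

theorem metric_isSymm : (D.metric x).IsSymm :=
  Matrix.IsSymm.ext fun i j => D.σ_symm x j i

theorem metricInv_isSymm : (D.metricInv x).IsSymm := by
  rw [metricInv_eq_inv]
  exact (D.metric_isSymm x).inv

theorem differentiableAt_metric (i j : Fin n) : DifferentiableAt ℝ (fun y => D.metric y i j) x :=
  (D.σ_smooth i j).differentiable (by simp) x

theorem differentiableAt_metricInv (i j : Fin n) :
    DifferentiableAt ℝ (fun y => D.metricInv y i j) x := by
  simp only [metricInv_eq_inv]
  exact differentiableAt_inv_apply (D.differentiableAt_metric x) (D.det_metric_ne_zero x) i j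

theorem metric_mul_connectionMatrix_apply (m i j : Fin n) :
    (D.metric x * D.connectionMatrix m x) i j =
      1 / 2 * (pd (fun y => D.σ y j i) m x + pd (fun y => D.σ y m i) j x -
        pd (fun y => D.σ y m j) i x) := by
  set L : Matrix (Fin n) (Fin n) ℝ := Matrix.of fun l k =>
    pd (fun y => D.σ y k l) m x + pd (fun y => D.σ y m l) k x - pd (fun y => D.σ y m k) l x
  have hΓ : D.connectionMatrix m x = (1 / 2 : ℝ) • (D.metricInv x * L) := rfl
  rw [hΓ, Matrix.mul_smul, ← mul_assoc, metric_mul_metricInv, one_mul]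
  rfl

theorem pdMatrix_metric (m : Fin n) :
    pdMatrix D.metric m x =
      (D.connectionMatrix m x)ᵀ * D.metric x + D.metric x * D.connectionMatrix m x := by
  have hlower : (D.connectionMatrix m x)ᵀ * D.metric x =
      (D.metric x * D.connectionMatrix m x)ᵀ := by
    rw [Matrix.transpose_mul, (D.metric_isSymm x).eq]
  ext i j
  rw [hlower, Matrix.add_apply, Matrix.transpose_apply, metric_mul_connectionMatrix_apply,
    metric_mul_connectionMatrix_apply]
  simp only [pdMatrix, metric, Matrix.of_apply, D.σ_symm _ j i]
  ring

theorem pdMatrix_metricInv (m : Fin n) :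
    pdMatrix D.metricInv m x =
      -(D.metricInv x * (D.connectionMatrix m x)ᵀ + D.connectionMatrix m x * D.metricInv x) := by
  have hinv : D.metricInv = fun y => (D.metric y)⁻¹ := funext D.metricInv_eq_inv
  conv_lhs => rw [hinv]
  rw [pdMatrix_inv m (D.differentiableAt_metric x) (D.det_metric_ne_zero x),
    ← metricInv_eq_inv, pdMatrix_metric, mul_add, add_mul, mul_assoc, mul_assoc,
    metric_mul_metricInv, mul_one, ← mul_assoc (D.metricInv x) (D.metric x),
    metricInv_mul_metric, one_mul]

end LeafMetric

section Gradient

/-- The gradient `∇f = σ⁻¹ df` as the vector of its components `fⁱ`. -/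
def grad (f : (Fin n → ℝ) → ℝ) (x : Fin n → ℝ) : Fin n → ℝ := fun i => D.gradUp f i x

/-- The matrix of the covariant Hessian `f_{i;j}`. -/
def hessian (f : (Fin n → ℝ) → ℝ) (x : Fin n → ℝ) : Matrix (Fin n) (Fin n) ℝ :=
  Matrix.of fun i j => D.hess f i j x

variable {f g : (Fin n → ℝ) → ℝ} {x : Fin n → ℝ}

theorem grad_eq_metricInv_mulVec (f : (Fin n → ℝ) → ℝ) (x : Fin n → ℝ) :
    D.grad f x = D.metricInv x *ᵥ differential f x := rfl

theorem metric_mulVec_grad (f : (Fin n → ℝ) → ℝ) (x : Fin n → ℝ) :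
    D.metric x *ᵥ D.grad f x = differential f x := by
  rw [grad_eq_metricInv_mulVec, Matrix.mulVec_mulVec, metric_mul_metricInv, Matrix.one_mulVec]

theorem inner2_eq_differential_dotProduct_grad (f g : (Fin n → ℝ) → ℝ) (x : Fin n → ℝ) :
    D.inner2 f g x = differential f x ⬝ᵥ D.grad g x := by
  simp only [inner2, dotProduct, grad, gradUp, differential, Finset.mul_sum]
  exact Finset.sum_congr rfl fun i _ => Finset.sum_congr rfl fun j _ => by ring

theorem inner2_comm (f g : (Fin n → ℝ) → ℝ) (x : Fin n → ℝ) :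
    D.inner2 f g x = D.inner2 g f x := by
  rw [inner2_eq_differential_dotProduct_grad, inner2_eq_differential_dotProduct_grad,
    grad_eq_metricInv_mulVec, grad_eq_metricInv_mulVec, ← Matrix.dotProduct_transpose_mulVec,
    (D.metricInv_isSymm x).eq]

theorem gradSq_nonneg (f : (Fin n → ℝ) → ℝ) (x : Fin n → ℝ) : 0 ≤ D.gradSq f x := by
  have hσ : D.gradSq f x = ∑ i, ∑ j, D.σ x i j * D.grad f x i * D.grad f x j := by
    rw [gradSq, inner2_eq_differential_dotProduct_grad, ← D.metric_mulVec_grad]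
    simp only [dotProduct, Matrix.mulVec, metric, Matrix.of_apply, Finset.sum_mul]
    exact Finset.sum_congr rfl fun i _ => Finset.sum_congr rfl fun j _ => by ring
  rw [hσ]
  rcases eq_or_ne (D.grad f x) 0 with hzero | hne
  · simp [hzero]
  · exact (D.σ_posdef x _ hne).le

theorem differentiableAt_grad (hf : DifferentiableAt ℝ (differential f) x) :
    DifferentiableAt ℝ (D.grad f) x :=
  differentiableAt_pi.2 fun i =>
    differentiableAt_dotProduct (differentiableAt_pi.2 (D.differentiableAt_metricInv x i)) hf

theorem pdVec_differential (f : (Fin n → ℝ) → ℝ) (m : Fin n) (x : Fin n → ℝ) :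
    pdVec (differential f) m x =
      D.hessian f x m + (D.connectionMatrix m x)ᵀ *ᵥ differential f x :=
  funext fun _ => (sub_add_cancel _ _).symm

theorem pdVec_grad (hf : DifferentiableAt ℝ (differential f) x) (m : Fin n) :
    pdVec (D.grad f) m x =
      D.metricInv x *ᵥ D.hessian f x m - D.connectionMatrix m x *ᵥ D.grad f x := by
  rw [funext (D.grad_eq_metricInv_mulVec f), pdVec_mulVec m (D.differentiableAt_metricInv x) hf,
    pdMatrix_metricInv, D.pdVec_differential, Matrix.neg_mulVec, Matrix.add_mulVec,
    Matrix.mulVec_add, ← Matrix.mulVec_mulVec, ← Matrix.mulVec_mulVec]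
  abel

theorem differentiableAt_inner2 (hf : DifferentiableAt ℝ (differential f) x)
    (hg : DifferentiableAt ℝ (differential g) x) : DifferentiableAt ℝ (D.inner2 f g) x := by
  simp only [funext (D.inner2_eq_differential_dotProduct_grad f g)]
  exact differentiableAt_dotProduct hf (D.differentiableAt_grad hg)

theorem pd_inner2 (hf : DifferentiableAt ℝ (differential f) x)
    (hg : DifferentiableAt ℝ (differential g) x) (m : Fin n) :
    pd (D.inner2 f g) m x =
      D.hessian f x m ⬝ᵥ D.grad g x + D.hessian g x m ⬝ᵥ D.grad f x := by
  have hraise : differential f x ⬝ᵥ (D.metricInv x *ᵥ D.hessian g x m) =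
      D.hessian g x m ⬝ᵥ D.grad f x := by
    rw [← Matrix.dotProduct_transpose_mulVec, (D.metricInv_isSymm x).eq,
      grad_eq_metricInv_mulVec]
  rw [funext (D.inner2_eq_differential_dotProduct_grad f g),
    pd_dotProduct m hf (D.differentiableAt_grad hg), D.pdVec_differential, D.pdVec_grad hg,
    add_dotProduct, dotProduct_sub, hraise, dotProduct_comm (_ᵀ *ᵥ _),
    Matrix.dotProduct_transpose_mulVec]
  ring

end Gradient

section Divergence

variable {x : Fin n → ℝ}

theorem divP_div {Z : Fin n → (Fin n → ℝ) → ℝ} {f : (Fin n → ℝ) → ℝ}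
    (hZ : ∀ i, DifferentiableAt ℝ (Z i) x) (hf : DifferentiableAt ℝ f x) (hfx : f x ≠ 0) :
    D.divP (fun i y => Z i y / f y) x =
      D.divP Z x / f x - (differential f x ⬝ᵥ fun i => Z i x) / f x ^ 2 := by
  simp only [divP, dotProduct, Finset.sum_div, ← Finset.sum_sub_distrib]
  refine Finset.sum_congr rfl fun i _ => ?_
  rw [pd_div i (hZ i) hf hfx, add_div, Finset.sum_div]
  simp only [mul_div_assoc, differential]
  ring

theorem divP_gradUp {f : (Fin n → ℝ) → ℝ} (hf : DifferentiableAt ℝ (differential f) x) :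
    D.divP (D.gradUp f) x = (D.metricInv x * (D.hessian f x)ᵀ).trace :=
  Finset.sum_congr rfl fun i _ => by
    have hpd : pd (D.gradUp f i) i x = (D.metricInv x *ᵥ D.hessian f x i) i -
        (D.connectionMatrix i x *ᵥ D.grad f x) i := congrFun (D.pdVec_grad hf i) i
    rw [hpd]
    exact sub_add_cancel _ _

end Divergence

section GraphArea

variable {u : (Fin n → ℝ) → ℝ} {x : Fin n → ℝ}

theorem γ_add_gradSq_pos (u : (Fin n → ℝ) → ℝ) (x : Fin n → ℝ) : 0 < D.γ x + D.gradSq u x :=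
  add_pos_of_pos_of_nonneg (D.γ_pos x) (D.gradSq_nonneg u x)

theorem Wf_pos (u : (Fin n → ℝ) → ℝ) (x : Fin n → ℝ) : 0 < D.Wf u x :=
  Real.sqrt_pos.2 (D.γ_add_gradSq_pos u x)

theorem Wf_sq (u : (Fin n → ℝ) → ℝ) (x : Fin n → ℝ) :
    D.Wf u x ^ 2 = D.γ x + D.gradSq u x :=
  Real.sq_sqrt (D.γ_add_gradSq_pos u x).le

theorem differentiableAt_γ (x : Fin n → ℝ) : DifferentiableAt ℝ D.γ x :=
  D.γ_smooth.differentiable (by simp) x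

theorem differentiableAt_Wf (hu : DifferentiableAt ℝ (differential u) x) :
    DifferentiableAt ℝ (D.Wf u) x :=
  ((D.differentiableAt_γ x).add (D.differentiableAt_inner2 hu hu)).sqrt
    (D.γ_add_gradSq_pos u x).ne'

theorem differential_Wf (hu : DifferentiableAt ℝ (differential u) x) :
    differential (D.Wf u) x =
      (2 * D.Wf u x)⁻¹ • (differential D.γ x + (2 : ℝ) • (D.hessian u x *ᵥ D.grad u x)) := by
  funext m
  have hγ := D.differentiableAt_γ x
  have hgradSq : DifferentiableAt ℝ (D.gradSq u) x := D.differentiableAt_inner2 hu hu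
  have hpd_gradSq : pd (D.gradSq u) m x = 2 * (D.hessian u x *ᵥ D.grad u x) m :=
    (D.pd_inner2 hu hu m).trans (two_mul _).symm
  calc pd (D.Wf u) m x
      = pd (fun y => D.γ y + D.gradSq u y) m x / (2 * D.Wf u x) :=
        pd_sqrt m (hγ.fun_add hgradSq) (D.γ_add_gradSq_pos u x).ne'
    _ = (2 * D.Wf u x)⁻¹ * (pd D.γ m x + 2 * (D.hessian u x *ᵥ D.grad u x) m) := by
        rw [pd_add m hγ hgradSq, hpd_gradSq, div_eq_inv_mul]

end GraphArea

section GraphMetric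

/-- The matrix `(gⁱʲ)` of the inverse of the metric induced on the Killing graph. -/
def graphMetricInv (u : (Fin n → ℝ) → ℝ) (x : Fin n → ℝ) : Matrix (Fin n) (Fin n) ℝ :=
  Matrix.of (D.gInv u x)

variable (u : (Fin n → ℝ) → ℝ) (x : Fin n → ℝ)

theorem graphMetricInv_eq :
    D.graphMetricInv u x =
      D.metricInv x - (D.Wf u x ^ 2)⁻¹ • Matrix.vecMulVec (D.grad u x) (D.grad u x) := by
  ext i j
  exact congrArg (D.σInv x i j - ·) (div_eq_inv_mul _ _)

theorem graphMetricInv_isSymm : (D.graphMetricInv u x).IsSymm := by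
  rw [graphMetricInv_eq]
  exact (D.metricInv_isSymm x).sub
    (Matrix.IsSymm.smul (Matrix.transpose_vecMulVec _ _) _)

theorem graphMetricInv_mulVec_differential :
    D.graphMetricInv u x *ᵥ differential u x = (D.γ x / D.Wf u x ^ 2) • D.grad u x := by
  have hW := (D.Wf_pos u x).ne'
  have hgradSq : D.grad u x ⬝ᵥ differential u x = D.Wf u x ^ 2 - D.γ x := by
    rw [dotProduct_comm, ← inner2_eq_differential_dotProduct_grad, Wf_sq, gradSq]
    ring
  rw [graphMetricInv_eq, Matrix.sub_mulVec, ← grad_eq_metricInv_mulVec, Matrix.smul_mulVec,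
    Matrix.vecMulVec_mulVec, hgradSq]
  ext i
  simp only [MulOpposite.op_sub, MulOpposite.op_pow, Pi.sub_apply, Pi.smul_apply,
    MulOpposite.smul_eq_mul_unop, MulOpposite.unop_sub, MulOpposite.unop_pow,
    MulOpposite.unop_op, smul_eq_mul]
  field_simp
  ring

theorem differential_dotProduct_graphMetricInv_mulVec (f : (Fin n → ℝ) → ℝ) :
    differential f x ⬝ᵥ (D.graphMetricInv u x *ᵥ differential u x) =
      D.γ x / D.Wf u x ^ 2 * D.inner2 f u x := by
  rw [graphMetricInv_mulVec_differential, dotProduct_smul,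
    ← inner2_eq_differential_dotProduct_grad, smul_eq_mul]

theorem trace_graphMetricInv_mul_transpose (T : Matrix (Fin n) (Fin n) ℝ) :
    (D.graphMetricInv u x * Tᵀ).trace =
      (D.metricInv x * Tᵀ).trace - D.grad u x ⬝ᵥ (T *ᵥ D.grad u x) / D.Wf u x ^ 2 := by
  rw [graphMetricInv_eq, sub_mul, Matrix.trace_sub, Matrix.smul_mul, Matrix.vecMulVec_mul,
    Matrix.trace_smul, Matrix.trace_vecMulVec, Matrix.vecMul_transpose, smul_eq_mul,
    div_eq_inv_mul]

theorem trace_graphMetricInv_mul_hessian_transpose :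
    (D.graphMetricInv u x * (D.hessian u x)ᵀ).trace =
      ∑ i, ∑ j, D.gInv u x i j * D.hess u i j x := rfl

end GraphMetric

theorem divP_gradUp_div_Wf {u : (Fin n → ℝ) → ℝ} {x : Fin n → ℝ}
    (hu : DifferentiableAt ℝ (differential u) x) :
    D.divP (fun i y => D.gradUp u i y / D.Wf u y) x =
      (D.graphMetricInv u x * (D.hessian u x)ᵀ).trace / D.Wf u x -
        D.inner2 D.γ u x / (2 * D.Wf u x ^ 3) := by
  have hW := (D.Wf_pos u x).ne'
  have hdW : differential (D.Wf u) x ⬝ᵥ D.grad u x =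
      (D.inner2 D.γ u x + 2 * (D.grad u x ⬝ᵥ (D.hessian u x *ᵥ D.grad u x))) /
        (2 * D.Wf u x) := by
    rw [D.differential_Wf hu, smul_dotProduct, add_dotProduct, smul_dotProduct,
      dotProduct_comm (D.hessian u x *ᵥ _), inner2_eq_differential_dotProduct_grad]
    simp only [smul_eq_mul, div_eq_inv_mul]
  have hdiv : D.divP (fun i y => D.gradUp u i y / D.Wf u y) x =
      D.divP (D.gradUp u) x / D.Wf u x -
        (differential (D.Wf u) x ⬝ᵥ D.grad u x) / D.Wf u x ^ 2 :=
    D.divP_div (differentiableAt_pi.1 (D.differentiableAt_grad hu)) (D.differentiableAt_Wf hu) hW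
  rw [hdiv, hdW, D.divP_gradUp hu, trace_graphMetricInv_mul_transpose]
  field_simp
  ring

section AmbientConnection

variable (x : Fin n → ℝ) (i j k : Fin n)

theorem vComp_zero (v : ℝ × (Fin n → ℝ)) : vComp v 0 = v.1 := rfl

theorem vComp_succ (v : ℝ × (Fin n → ℝ)) : vComp v i.succ = v.2 i := rfl

theorem ambPd_zero (f : (Fin n → ℝ) → ℝ) : ambPd f 0 x = 0 := rfl

theorem ambPd_succ (f : (Fin n → ℝ) → ℝ) : ambPd f i.succ x = pd f i x := rfl

theorem ambG_zero_zero : D.ambG x 0 0 = (D.γ x)⁻¹ := one_div _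

theorem ambG_zero_succ : D.ambG x 0 i.succ = 0 := rfl

theorem ambG_succ_zero : D.ambG x i.succ 0 = 0 := rfl

theorem ambG_succ_succ : D.ambG x i.succ j.succ = D.σ x i j := rfl

theorem ambGInv_zero_zero : D.ambGInv x 0 0 = D.γ x := rfl

theorem ambGInv_zero_succ : D.ambGInv x 0 i.succ = 0 := rfl

theorem ambGInv_succ_zero : D.ambGInv x i.succ 0 = 0 := rfl

theorem ambGInv_succ_succ : D.ambGInv x i.succ j.succ = D.σInv x i j := rfl

theorem ambG_comm (a b : Fin (n + 1)) : D.ambG x a b = D.ambG x b a := by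
  cases a using Fin.cases <;> cases b using Fin.cases <;>
    simp only [ambG_zero_succ, ambG_succ_zero, ambG_succ_succ, D.σ_symm x]

theorem ambΓ_comm (a b c : Fin (n + 1)) : D.ambΓ x a b c = D.ambΓ x a c b := by
  simp only [ambΓ, fun y => D.ambG_comm y c b]
  exact congrArg _ (Finset.sum_congr rfl fun e _ => by ring)

theorem ambΓ_zero (b c : Fin (n + 1)) :
    D.ambΓ x 0 b c = D.γ x / 2 *
      (ambPd (fun y => D.ambG y b 0) c x + ambPd (fun y => D.ambG y c 0) b x) := by
  simp only [ambΓ, Fin.sum_univ_succ, ambGInv_zero_zero, ambGInv_zero_succ, ambPd_zero,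
    one_div, sub_zero, zero_mul, Finset.sum_const_zero, add_zero]
  ring

theorem ambΓ_succ (b c : Fin (n + 1)) :
    D.ambΓ x k.succ b c = 1 / 2 * ∑ l, D.σInv x k l *
      (ambPd (fun y => D.ambG y b l.succ) c x + ambPd (fun y => D.ambG y c l.succ) b x -
        pd (fun y => D.ambG y b c) l x) := by
  simp only [ambΓ, Fin.sum_univ_succ, ambGInv_succ_zero, ambGInv_succ_succ, ambPd_succ, zero_mul,
    zero_add]

theorem ambΓ_zero_zero_zero : D.ambΓ x 0 0 0 = 0 := by
  simp [ambΓ_zero, ambPd_zero]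

theorem ambΓ_zero_succ_succ : D.ambΓ x 0 i.succ j.succ = 0 := by
  simp [ambΓ_zero, ambPd_succ, ambG_succ_zero, pd_const]

theorem ambΓ_zero_succ_zero : D.ambΓ x 0 i.succ 0 = -(pd D.γ i x / (2 * D.γ x)) := by
  have hγ := (D.γ_pos x).ne'
  simp only [ambΓ_zero, ambPd_zero, ambPd_succ, ambG_zero_zero,
    pd_inv i (D.differentiableAt_γ x) hγ]
  field_simp
  ring

theorem ambΓ_succ_zero_zero : D.ambΓ x k.succ 0 0 = D.grad D.γ x k / (2 * D.γ x ^ 2) := by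
  have hγ := (D.γ_pos x).ne'
  simp only [ambΓ_succ, ambPd_zero, ambG_zero_zero, pd_inv _ (D.differentiableAt_γ x) hγ,
    grad, gradUp, Finset.mul_sum, Finset.sum_div]
  exact Finset.sum_congr rfl fun l _ => by field_simp; ring

theorem ambΓ_succ_succ_zero : D.ambΓ x k.succ i.succ 0 = 0 := by
  simp [ambΓ_succ, ambPd_zero, ambPd_succ, ambG_zero_succ, ambG_succ_zero, pd_const]

theorem ambΓ_succ_succ_succ :
    D.ambΓ x k.succ i.succ j.succ = D.connectionMatrix i x k j := by
  simp only [ambΓ_succ, ambPd_succ, ambG_succ_succ, connectionMatrix, Matrix.of_apply, Γc]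
  exact congrArg _ (Finset.sum_congr rfl fun l _ => by ring)

theorem sum_sum_mul_vComp_mul_vComp (T : Fin (n + 1) → Fin (n + 1) → ℝ)
    (v w : ℝ × (Fin n → ℝ)) :
    ∑ a, ∑ b, T a b * vComp v a * vComp w b =
      T 0 0 * v.1 * w.1 + (∑ j, T 0 j.succ * w.2 j) * v.1 +
        (∑ i, T i.succ 0 * v.2 i) * w.1 + ∑ i, v.2 i * ∑ j, T i.succ j.succ * w.2 j := by
  simp only [Fin.sum_univ_succ, vComp_zero, vComp_succ, Finset.sum_add_distrib,
    Finset.mul_sum, ← add_assoc, mul_assoc, mul_comm, mul_left_comm]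
  ring

theorem ambInner_eq (v w : ℝ × (Fin n → ℝ)) :
    D.ambInner x v w = v.1 * w.1 / D.γ x + v.2 ⬝ᵥ (D.metric x *ᵥ w.2) := by
  rw [ambInner, sum_sum_mul_vComp_mul_vComp]
  simp only [ambG_zero_zero, ambG_zero_succ, ambG_succ_zero, ambG_succ_succ, dotProduct,
    Matrix.mulVec, metric, Matrix.of_apply, zero_mul, Finset.sum_const_zero, add_zero]
  ring

theorem ambCov_fst (Z : (Fin n → ℝ) → ℝ × (Fin n → ℝ)) (v : ℝ × (Fin n → ℝ)) :
    (D.ambCov Z v x).1 = v.2 ⬝ᵥ differential (fun y => (Z y).1) x -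
      ((differential D.γ x ⬝ᵥ v.2) * (Z x).1 + (differential D.γ x ⬝ᵥ (Z x).2) * v.1) /
        (2 * D.γ x) := by
  simp only [ambCov, sum_sum_mul_vComp_mul_vComp, D.ambΓ_comm x 0 0 (Fin.succ _),
    ambΓ_zero_zero_zero, ambΓ_zero_succ_zero, ambΓ_zero_succ_succ, dotProduct, differential,
    neg_mul, Finset.sum_neg_distrib, div_mul_eq_mul_div, ← Finset.sum_div, zero_mul,
    Finset.sum_const_zero, mul_zero]
  ring

theorem ambCov_snd (Z : (Fin n → ℝ) → ℝ × (Fin n → ℝ)) (v : ℝ × (Fin n → ℝ)) :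
    (D.ambCov Z v x).2 =
      ∑ i, v.2 i • (pdVec (fun y => (Z y).2) i x + D.connectionMatrix i x *ᵥ (Z x).2) +
        (v.1 * (Z x).1 / (2 * D.γ x ^ 2)) • D.grad D.γ x := by
  funext k
  simp only [ambCov, sum_sum_mul_vComp_mul_vComp, D.ambΓ_comm x k.succ 0 (Fin.succ _),
    ambΓ_succ_zero_zero, ambΓ_succ_succ_zero, ambΓ_succ_succ_succ, pdVec, Matrix.mulVec,
    dotProduct, Pi.add_apply, Finset.sum_apply, Pi.smul_apply, smul_eq_mul, mul_add,
    Finset.sum_add_distrib, zero_mul, Finset.sum_const_zero, add_zero]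
  ring

end AmbientConnection

section MeanCurvature

/-- The matrix `(aᵢⱼ)` of the second fundamental form of the Killing graph. -/
def secondFundamentalForm (u : (Fin n → ℝ) → ℝ) (x : Fin n → ℝ) : Matrix (Fin n) (Fin n) ℝ :=
  Matrix.of fun i j => D.sff u i j x

variable (u : (Fin n → ℝ) → ℝ) (x : Fin n → ℝ)

theorem ambInner_normalN (v : ℝ × (Fin n → ℝ)) :
    D.ambInner x v (D.normalN u x) = (v.1 - v.2 ⬝ᵥ differential u x) / D.Wf u x := by
  have hγ := (D.γ_pos x).ne'
  have hsnd : (D.normalN u x).2 = (-(D.Wf u x)⁻¹) • D.grad u x := by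
    funext k
    simp only [normalN, grad, Pi.smul_apply, smul_eq_mul]
    ring
  rw [ambInner_eq, hsnd, Matrix.mulVec_smul, metric_mulVec_grad, dotProduct_smul, smul_eq_mul,
    normalN]
  field_simp
  ring

theorem ambCov_tangentV_fst (i j : Fin n) :
    (D.ambCov (tangentV u j) (tangentV u i x) x).1 = pd (pd u j) i x -
      (pd D.γ i x * pd u j x + pd D.γ j x * pd u i x) / (2 * D.γ x) := by
  rw [ambCov_fst]
  simp only [tangentV, single_one_dotProduct, dotProduct_single_one]
  rfl

theorem ambCov_tangentV_snd (i j : Fin n) :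
    (D.ambCov (tangentV u j) (tangentV u i x) x).2 = (fun k => D.Γc x i j k) +
      (pd u i x * pd u j x / (2 * D.γ x ^ 2)) • D.grad D.γ x := by
  have hpdVec : pdVec (fun y => (tangentV u j y).2) i x = 0 := funext fun _ => pd_const i _
  have hconnection : D.connectionMatrix i x *ᵥ (tangentV u j x).2 = fun k => D.Γc x i j k :=
    Matrix.mulVec_single_one _ _
  rw [ambCov_snd, Finset.sum_eq_single_of_mem i (Finset.mem_univ i)
    fun l _ hl => by simp [tangentV, hl], hpdVec, hconnection]
  simp [tangentV]

theorem secondFundamentalForm_eq :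
    D.secondFundamentalForm u x = (D.Wf u x)⁻¹ • (D.hessian u x -
      (2 * D.γ x)⁻¹ • (Matrix.vecMulVec (differential D.γ x) (differential u x) +
        Matrix.vecMulVec (differential u x) (differential D.γ x)) -
      (D.inner2 D.γ u x / (2 * D.γ x ^ 2)) •
        Matrix.vecMulVec (differential u x) (differential u x)) := by
  ext i j
  have hΓ : (fun k => D.Γc x i j k) ⬝ᵥ differential u x =
      pd (pd u j) i x - D.hessian u x i j := (sub_sub_cancel _ _).symm
  have hgradγ : D.grad D.γ x ⬝ᵥ differential u x = D.inner2 D.γ u x := by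
    rw [inner2_comm, inner2_eq_differential_dotProduct_grad, dotProduct_comm]
  change D.ambInner x (D.ambCov (tangentV u j) (tangentV u i x) x) (D.normalN u x) = _
  rw [ambInner_normalN, ambCov_tangentV_fst, ambCov_tangentV_snd, add_dotProduct,
    smul_dotProduct, hΓ, hgradγ]
  simp only [Matrix.smul_apply, Matrix.sub_apply, Matrix.add_apply, Matrix.vecMulVec_apply,
    smul_eq_mul, differential]
  ring

theorem nH_eq_trace :
    D.nH u x = (D.graphMetricInv u x * (D.secondFundamentalForm u x)ᵀ).trace := rfl

theorem nH_eq_nondivergence_form :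
    D.nH u x = (D.graphMetricInv u x * (D.hessian u x)ᵀ).trace / D.Wf u x -
      (2 * D.γ x + D.gradSq u x) / D.Wf u x ^ 3 * (D.inner2 D.γ u x / (2 * D.γ x)) := by
  have hγ := (D.γ_pos x).ne'
  have hW := (D.Wf_pos u x).ne'
  have hsymm : differential u x ⬝ᵥ (D.graphMetricInv u x *ᵥ differential D.γ x) =
      differential D.γ x ⬝ᵥ (D.graphMetricInv u x *ᵥ differential u x) := by
    rw [← Matrix.dotProduct_transpose_mulVec, (D.graphMetricInv_isSymm u x).eq]
  rw [nH_eq_trace, secondFundamentalForm_eq]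
  simp only [Matrix.transpose_smul, Matrix.transpose_sub, Matrix.transpose_add,
    Matrix.transpose_vecMulVec, Matrix.mul_smul, Matrix.mul_sub, Matrix.mul_add,
    Matrix.mul_vecMulVec, Matrix.trace_smul, Matrix.trace_sub, Matrix.trace_add,
    Matrix.trace_vecMulVec, smul_eq_mul, dotProduct_comm (_ *ᵥ _), hsymm,
    differential_dotProduct_graphMetricInv_mulVec]
  rw [← gradSq]
  field_simp
  ring

variable {u x}

theorem nH_eq_divergence_form (hu : DifferentiableAt ℝ (differential u) x) :
    D.nH u x = D.divP (fun i y => D.gradUp u i y / D.Wf u y) x -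
      1 / (2 * D.γ x * D.Wf u x) * D.inner2 D.γ u x := by
  have hγ := (D.γ_pos x).ne'
  have hW := (D.Wf_pos u x).ne'
  have hgradSq : D.gradSq u x = D.Wf u x ^ 2 - D.γ x := by rw [Wf_sq]; ring
  rw [nH_eq_nondivergence_form, D.divP_gradUp_div_Wf hu, hgradSq]
  field_simp
  ring

end MeanCurvature

end LeafData

theorem mean_curvature_divergence_form_general
    {n : ℕ} (D : LeafData n) {u : (Fin n → ℝ) → ℝ} {x : Fin n → ℝ} (hu : ContDiffAt ℝ 2 u x) :
    (D.nH u x =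
        D.divP (fun i y => D.gradUp u i y / D.Wf u y) x -
          1 / (2 * D.γ x * D.Wf u x) * D.inner2 D.γ u x) ∧
      (D.nH u x =
        D.divP (fun i y => D.gradUp u i y / D.Wf u y) x -
          D.γ x / D.Wf u x * (D.inner2 D.γ u x / (2 * (D.γ x) ^ 2))) ∧
      D.nH u x =
        (∑ i, ∑ j, D.gInv u x i j * D.hess u i j x) / D.Wf u x -
          (2 * D.γ x + D.gradSq u x) / (D.Wf u x) ^ 3 *
            (D.inner2 D.γ u x / (2 * D.γ x)) := by
  have hdiv := D.nH_eq_divergence_form (differentiableAt_differential hu)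
  refine ⟨hdiv, ?_, ?_⟩
  · have hγ := (D.γ_pos x).ne'
    rw [hdiv]
    field_simp
  · rw [nH_eq_nondivergence_form, trace_graphMetricInv_mul_hessian_transpose]

/-- The mean curvature `H` of the Killing graph of `u`
satisfies the divergence-form identities (19) and (20), and equivalently the
nondivergence form (14):
`nH = div(∇u/W) − (1/(2γW))⟨∇γ, ∇u⟩ = div(∇u/W) − (γ/W)⟨∇̄_Y Y, ∇u⟩`
`   = (σ^{ij} − u^i u^j/W²) u_{i;j}/W − ((2γ + |∇u|²)/W³)⟨∇γ/(2γ), ∇u⟩`. -/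
theorem mean_curvature_divergence_form
    {n : ℕ} (D : LeafData n) (Ω : Set (Fin n → ℝ))
    (hΩo : IsOpen Ω) (hΩb : Bornology.IsBounded Ω)
    (u : (Fin n → ℝ) → ℝ) (hu : ContDiff ℝ (⊤ : ℕ∞) u) :
    ∀ x ∈ Ω,
      (D.nH u x =
          D.divP (fun i y => D.gradUp u i y / D.Wf u y) x -
            1 / (2 * D.γ x * D.Wf u x) * D.inner2 D.γ u x) ∧
        (D.nH u x =
          D.divP (fun i y => D.gradUp u i y / D.Wf u y) x -
            D.γ x / D.Wf u x * (D.inner2 D.γ u x / (2 * (D.γ x) ^ 2))) ∧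
        D.nH u x =
          (∑ i, ∑ j, D.gInv u x i j * D.hess u i j x) / D.Wf u x -
            (2 * D.γ x + D.gradSq u x) / (D.Wf u x) ^ 3 *
              (D.inner2 D.γ u x / (2 * D.γ x)) := by
  exact fun x _ => mean_curvature_divergence_form_general D
    (contDiff_infty.1 hu 2).contDiffAt

end KMCF
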